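/- In the concrete quasi-free CAR model with past P = {n ∈ ℤ : n < 0} and future F = {n ∈ ℤ : n ≥ 0}: assume there is ε ∈ (0,1/2) with ε ≤ λ_l ≤ 1−ε and λ_l ≠ 1/2 for all l ∈ ℤ, and let ξ ∈ H satisfy the l-th intertwining equations for every l ∈ F. Then for every pair (A,B) of finite subsets of ℤ with ⟨e_{(A,B)}, ξ⟩ ≠ 0, the set {l ∈ F : l ∉ A ∪ B and ⟨e_{(A∪{l}, B∪{l})}, ξ⟩ ≠ 0} is finite. (A basis pair can be l-paired for at most finitely many future indices l.) -/

import Mathlib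

/- The concrete quasi-free CAR model: `H = ℓ²(Finset ℤ × Finset ℤ)` with orthonormal basis
`e (A, B)`, vacuum `Ω = e (∅, ∅)`, and operators `a l`, `b l`, `G` given on the basis by the
quasi-free formulas with symbol `λ` (diagonal, `R h_l = λ_l h_l`). -/

noncomputable section

/-- The GNS Hilbert space: `ℓ²` over pairs of finite subsets of `ℤ`. -/
abbrev CARSpace := lp (fun _ : Finset ℤ × Finset ℤ => ℂ) 2

/-- The orthonormal basis vector `e_{(A,B)}`. -/
def carE (p : Finset ℤ × Finset ℤ) : CARSpace := lp.single 2 p 1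

/-- The vacuum vector `Ω = e_{(∅,∅)}`. -/
def carΩ : CARSpace := carE (∅, ∅)

/-- `n(l, X)` = number of elements of `X` strictly below `l`. -/
def nlt (l : ℤ) (X : Finset ℤ) : ℕ := (X.filter fun j => j < l).card

/-- `a` is the family of quasi-free annihilation-type operators `a_l = π_R(a(h_l))`:
`a_l e_{(A,B)} = √(1−λ_l)·(−1)^{|B|}·(−1)^{n(l,A)}·[l ∉ A]·e_{(A∪{l},B)}
              + √(λ_l)·(−1)^{n(l,B)}·[l ∈ B]·e_{(A,B∖{l})}`. -/
def IsCAR_a (lam : ℤ → ℝ) (a : ℤ → CARSpace →L[ℂ] CARSpace) : Prop :=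
  ∀ (l : ℤ) (A B : Finset ℤ),
    a l (carE (A, B)) =
      ((Real.sqrt (1 - lam l) : ℂ) * (-1) ^ B.card * (-1) ^ nlt l A *
          (if l ∈ A then 0 else 1)) • carE (insert l A, B) +
      ((Real.sqrt (lam l) : ℂ) * (-1) ^ nlt l B *
          (if l ∈ B then 1 else 0)) • carE (A, B.erase l)

/-- `b` is the family of commutant quasi-free operators:
`b_l e_{(A,B)} = √(λ_l)·(−1)^{|B|}·(−1)^{n(l,A)}·[l ∉ A]·e_{(A∪{l},B)}
              − √(1−λ_l)·(−1)^{n(l,B)}·[l ∈ B]·e_{(A,B∖{l})}`. -/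
def IsCAR_b (lam : ℤ → ℝ) (b : ℤ → CARSpace →L[ℂ] CARSpace) : Prop :=
  ∀ (l : ℤ) (A B : Finset ℤ),
    b l (carE (A, B)) =
      ((Real.sqrt (lam l) : ℂ) * (-1) ^ B.card * (-1) ^ nlt l A *
          (if l ∈ A then 0 else 1)) • carE (insert l A, B) -
      ((Real.sqrt (1 - lam l) : ℂ) * (-1) ^ nlt l B *
          (if l ∈ B then 1 else 0)) • carE (A, B.erase l)

/-- `G = Γ⊗Γ` : `G e_{(A,B)} = (−1)^{|A|+|B|} e_{(A,B)}`. -/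
def IsCAR_G (G : CARSpace →L[ℂ] CARSpace) : Prop :=
  ∀ (A B : Finset ℤ), G (carE (A, B)) = ((-1 : ℂ) ^ (A.card + B.card)) • carE (A, B)

/-- `ξ` satisfies the `l`-th intertwining equations:
`(1−λ_l)^{−1/2}·(a_l ξ) = −λ_l^{−1/2}·G(b_l ξ)` and
`λ_l^{−1/2}·(a_l* ξ) = −(1−λ_l)^{−1/2}·b_l*(G ξ)`. -/
def IntertwinesAt (lam : ℤ → ℝ) (a b : ℤ → CARSpace →L[ℂ] CARSpace)
    (G : CARSpace →L[ℂ] CARSpace) (l : ℤ) (ξ : CARSpace) : Prop :=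
  (Real.sqrt (1 - lam l) : ℂ)⁻¹ • a l ξ = -((Real.sqrt (lam l) : ℂ)⁻¹) • G (b l ξ) ∧
  (Real.sqrt (lam l) : ℂ)⁻¹ • (star (a l)) ξ =
    -((Real.sqrt (1 - lam l) : ℂ)⁻¹) • (star (b l)) (G ξ)

local notation "⟪" x ", " y "⟫" => @inner ℂ _ _ x y

theorem carE_apply (p q : Finset ℤ × Finset ℤ) : carE p q = if q = p then 1 else 0 := by
  simp [carE, lp.single_apply, Pi.single_apply]

theorem inner_carE_left (p : Finset ℤ × Finset ℤ) (ξ : CARSpace) : ⟪carE p, ξ⟫ = ξ p := by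
  simp [carE, lp.inner_single_left]

/-- The coordinate of `T ξ` at `q` is a finite sum when row `q` of `T` has finite support. -/
theorem clm_apply_eq_sum_of_row_support (T : CARSpace →L[ℂ] CARSpace) (ξ : CARSpace)
    (q : Finset ℤ × Finset ℤ) (S : Finset (Finset ℤ × Finset ℤ))
    (hS : ∀ p ∉ S, T (carE p) q = 0) :
    T ξ q = ∑ p ∈ S, ξ p * T (carE p) q := by
  have h1 : HasSum (fun p => ξ p • carE p) ξ := by
    convert lp.hasSum_single (p := 2) (by norm_num) ξ using 2 with p
    rw [carE, ← lp.single_smul]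
    simp
  have h2 := h1.mapL ((innerSL ℂ (carE q)).comp T)
  simp only [ContinuousLinearMap.comp_apply, innerSL_apply_apply, map_smul, inner_carE_left,
    smul_eq_mul] at h2
  refine h2.unique (hasSum_sum_of_ne_finset_zero fun p hp => ?_)
  rw [hS p hp, mul_zero]

/-- The coordinates of a square-summable vector are eventually small. -/
theorem finite_setOf_le_norm_apply (ξ : CARSpace) {δ : ℝ} (hδ : 0 < δ) :
    {p | δ ≤ ‖ξ p‖}.Finite := by
  have h := (lp.memℓp ξ).summable (by norm_num)
  have h' := h.tendsto_cofinite_zero.eventually_lt_const (show (0 : ℝ) < δ ^ 2 by positivity)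
  refine (Filter.eventually_cofinite.mp h').subset fun p hp => ?_
  simp only [Set.mem_ofPred_eq] at hp ⊢
  simp only [ENNReal.toReal_ofNat, Real.rpow_ofNat, not_lt]
  gcongr

/-- The coordinate of the first intertwining equation at `(A ∪ {l}, B)` links the coefficients of
`ξ` at `(A, B)` and `(A ∪ {l}, B ∪ {l})`. -/
theorem intertwinesAt_coord {lam : ℤ → ℝ} {a b : ℤ → CARSpace →L[ℂ] CARSpace}
    {G : CARSpace →L[ℂ] CARSpace} (ha : IsCAR_a lam a) (hb : IsCAR_b lam b) (hG : IsCAR_G G)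
    {ξ : CARSpace} {l : ℤ} (hξ : IntertwinesAt lam a b G l ξ) {A B : Finset ℤ}
    (hA : l ∉ A) (hB : l ∉ B) :
    let s : ℂ := (Real.sqrt (lam l) : ℂ)
    let c : ℂ := (Real.sqrt (1 - lam l) : ℂ)
    let γ : ℂ := (-1) ^ (A.card + 1 + B.card)
    ξ (A, B) * ((-1) ^ B.card * (-1) ^ nlt l A * (c⁻¹ * c + γ * (s⁻¹ * s))) +
      ξ (insert l A, insert l B) *
        ((-1) ^ nlt l (insert l B) * (c⁻¹ * s - γ * (s⁻¹ * c))) = 0 := by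
  intro s c γ
  let T : CARSpace →L[ℂ] CARSpace := c⁻¹ • a l + s⁻¹ • (G ∘L b l)
  have hTξ : T ξ = 0 := by
    simp only [T, add_apply, smul_apply,
      ContinuousLinearMap.comp_apply]
    rw [hξ.1, neg_smul, neg_add_cancel]
  have hTe : ∀ A' B' : Finset ℤ, T (carE (A', B')) (insert l A, B) =
      (if A' = A ∧ B' = B then
        (-1) ^ B.card * (-1) ^ nlt l A * (c⁻¹ * c + γ * (s⁻¹ * s)) else 0) +
      (if A' = insert l A ∧ B' = insert l B then
        (-1) ^ nlt l (insert l B) * (c⁻¹ * s - γ * (s⁻¹ * c)) else 0) := by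
    intro A' B'
    have hγ : (-1 : ℂ) ^ ((insert l A).card + B.card) = γ := by
      rw [Finset.card_insert_of_notMem hA]
    simp only [T, add_apply, smul_apply,
      ContinuousLinearMap.comp_apply, ha l, hb l, map_sub, map_smul, hG _ _, lp.coeFn_add,
      lp.coeFn_sub, lp.coeFn_smul, Pi.add_apply, Pi.sub_apply, Pi.smul_apply, carE_apply,
      Prod.mk.injEq, smul_eq_mul]
    by_cases h1 : A' = A ∧ B' = B
    · obtain ⟨rfl, rfl⟩ := h1
      have hne : A' ≠ insert l A' := fun e => hA (e ▸ Finset.mem_insert_self l A')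
      simp [hA, hB, hne]
      ring
    by_cases h2 : A' = insert l A ∧ B' = insert l B
    · obtain ⟨rfl, rfl⟩ := h2
      have hne : insert l A ≠ A := fun e => hA (e ▸ Finset.mem_insert_self l A)
      simp [hB, hγ, hne]
      ring
    rw [if_neg h1, if_neg h2]
    have hcreate : l ∉ A' → ¬(insert l A = insert l A' ∧ B = B') := fun h e =>
      h1 ⟨by rw [← Finset.erase_insert h, ← e.1, Finset.erase_insert hA], e.2.symm⟩
    have hannih : l ∈ B' → ¬(insert l A = A' ∧ B = B'.erase l) := fun h e =>
      h2 ⟨e.1.symm, by rw [e.2, Finset.insert_erase h]⟩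
    by_cases hlA : l ∈ A' <;> by_cases hlB : l ∈ B' <;> simp [hlA, hlB, hcreate, hannih]
  have h := clm_apply_eq_sum_of_row_support T ξ (insert l A, B)
    {(A, B), (insert l A, insert l B)} (by
      rintro ⟨A', B'⟩ hp
      simp only [Finset.mem_insert, Finset.mem_singleton, Prod.mk.injEq, not_or] at hp
      rw [hTe, if_neg hp.1, if_neg hp.2, add_zero])
  have hne : A ≠ insert l A := fun e => hA (e ▸ Finset.mem_insert_self l A)
  rw [Finset.sum_pair (by simp [hne]), hTξ, hTe, hTe] at h
  simpa [hne, hne.symm] using h.symm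

/-- If `x` and `y ≠ 0` satisfy the coordinate relation, then the sign `(-1) ^ n` is positive and
`y` is bounded below by a fixed multiple of `x`. -/
theorem le_norm_paired_coord {ε r : ℝ} (hε : 0 < ε) (hr : ε ≤ r) (hr' : r ≤ 1 - ε) {x y : ℂ}
    {i j k n : ℕ} (hy : y ≠ 0)
    (h : x * ((-1) ^ i * (-1) ^ j * ((Real.sqrt (1 - r) : ℂ)⁻¹ * (Real.sqrt (1 - r) : ℂ) +
        (-1) ^ n * ((Real.sqrt r : ℂ)⁻¹ * (Real.sqrt r : ℂ)))) +
      y * ((-1) ^ k * ((Real.sqrt (1 - r) : ℂ)⁻¹ * (Real.sqrt r : ℂ) -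
        (-1) ^ n * ((Real.sqrt r : ℂ)⁻¹ * (Real.sqrt (1 - r) : ℂ)))) = 0) :
    2 * ε * ‖x‖ ≤ ‖y‖ := by
  have hs2 : Real.sqrt r ^ 2 = r := Real.sq_sqrt (by linarith)
  have hc2 : Real.sqrt (1 - r) ^ 2 = 1 - r := Real.sq_sqrt (by linarith)
  have hs : 0 < Real.sqrt r := Real.sqrt_pos.mpr (by linarith)
  have hc : 0 < Real.sqrt (1 - r) := Real.sqrt_pos.mpr (by linarith)
  have hsε : Real.sqrt ε ≤ Real.sqrt r := Real.sqrt_le_sqrt hr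
  have hcε : Real.sqrt ε ≤ Real.sqrt (1 - r) := Real.sqrt_le_sqrt (by linarith)
  have hεcs : ε ≤ Real.sqrt (1 - r) * Real.sqrt r := by
    calc ε = Real.sqrt ε * Real.sqrt ε := (Real.mul_self_sqrt hε.le).symm
      _ ≤ _ := by gcongr
  generalize Real.sqrt r = s at *
  generalize Real.sqrt (1 - r) = c at *
  have hs0 : (s : ℂ) ≠ 0 := by exact_mod_cast hs.ne'
  have hc0 : (c : ℂ) ≠ 0 := by exact_mod_cast hc.ne'
  rw [inv_mul_cancel₀ hs0, inv_mul_cancel₀ hc0] at h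
  rcases neg_one_pow_eq_or ℂ n with hn | hn
  · rw [hn] at h
    have h' : x * ((-1) ^ i * (-1) ^ j * 2) * ((c * s : ℝ) : ℂ) =
        y * ((-1) ^ k * ((c ^ 2 - s ^ 2 : ℝ) : ℂ)) := by
      push_cast
      field_simp at h
      linear_combination h
    have hnorm := congrArg norm h'
    simp only [norm_mul, norm_pow, norm_neg, norm_one, one_pow, one_mul, Complex.norm_real,
      Complex.norm_ofNat, Real.norm_eq_abs, hs2, hc2] at hnorm
    have hle : |1 - r - r| ≤ 1 := abs_le.mpr ⟨by linarith, by linarith⟩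
    rw [← abs_mul, abs_of_pos (mul_pos hc hs)] at hnorm
    calc 2 * ε * ‖x‖ = ‖x‖ * 2 * ε := by ring
      _ ≤ ‖x‖ * 2 * (c * s) := by gcongr
      _ = ‖y‖ * |1 - r - r| := hnorm
      _ ≤ ‖y‖ * 1 := by gcongr
      _ = ‖y‖ := mul_one _
  · rw [hn] at h
    have h' : y * ((-1) ^ k * ((s ^ 2 + c ^ 2 : ℝ) : ℂ)) = 0 := by
      push_cast
      field_simp at h
      linear_combination h
    rw [hs2, hc2] at h'
    simp [hy] at h'

/-- with past `P = {n < 0}` and future `F = {n ≥ 0}`, assume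
`ε ≤ λ_l ≤ 1−ε`, `λ_l ≠ 1/2` for all `l`, with `0 < ε < 1/2`, and let `ξ` satisfy the
`l`-th intertwining equations for every `l ∈ F`. Then for every pair `(A,B)` with
`⟨e_{(A,B)}, ξ⟩ ≠ 0`, the set of `l ∈ F` with `l ∉ A ∪ B` and
`⟨e_{(A∪{l},B∪{l})}, ξ⟩ ≠ 0` is finite. -/
theorem stmt14 (lam : ℤ → ℝ) (ε : ℝ) (hε : 0 < ε ∧ ε < 1 / 2)
    (hlam : ∀ l : ℤ, ε ≤ lam l ∧ lam l ≤ 1 - ε ∧ lam l ≠ 1 / 2)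
    (a b : ℤ → CARSpace →L[ℂ] CARSpace) (G : CARSpace →L[ℂ] CARSpace)
    (ha : IsCAR_a lam a) (hb : IsCAR_b lam b) (hG : IsCAR_G G)
    (ξ : CARSpace) (hξ : ∀ l : ℤ, 0 ≤ l → IntertwinesAt lam a b G l ξ) :
    ∀ A B : Finset ℤ, ⟪carE (A, B), ξ⟫ ≠ 0 →
      {l : ℤ | 0 ≤ l ∧ l ∉ A ∪ B ∧ ⟪carE (insert l A, insert l B), ξ⟫ ≠ 0}.Finite := by
  intro A B hAB
  rw [inner_carE_left] at hAB
  have hδ : 0 < 2 * ε * ‖ξ (A, B)‖ := by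
    have := norm_pos_iff.mpr hAB
    have := hε.1
    positivity
  refine Set.Finite.of_injOn (f := fun l => (insert l A, insert l B)) ?_ ?_
    (finite_setOf_le_norm_apply ξ hδ)
  · rintro l ⟨hl0, hlAB, hl⟩
    rw [Finset.mem_union, not_or] at hlAB
    rw [inner_carE_left] at hl
    exact le_norm_paired_coord hε.1 (hlam l).1 (hlam l).2.1 hl
      (intertwinesAt_coord ha hb hG (hξ l hl0) hlAB.1 hlAB.2)
  · rintro l ⟨-, hl, -⟩ m - h
    have hmem : l ∈ insert m A := (Prod.mk.inj h).1 ▸ Finset.mem_insert_self l A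
    rw [Finset.mem_union, not_or] at hl
    exact (Finset.mem_insert.mp hmem).resolve_right hl.1

end
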